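/- Let r be a positive integer and let G be a depth-two claw with μ(G) ≥ 2r − 1. Then G is strictly r-EKR. -/

import Mathlib

open Finset SimpleGraph
open scoped Classical

variable {V : Type*}

/-- The finset of independent sets of a finite graph `G`. -/
noncomputable def indepSets [Fintype V] (G : SimpleGraph V) : Finset (Finset V) :=
  univ.filter fun A => ∀ x ∈ A, ∀ y ∈ A, ¬ G.Adj x y

/-- The finset of independent sets of size `r` of `G`, i.e. `I^(r)(G)`. -/
noncomputable def indepSetsSize [Fintype V] (G : SimpleGraph V) (r : ℕ) : Finset (Finset V) :=
  (indepSets G).filter fun A => A.card = r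

/-- The `r`-star centred at `v`: independent sets of size `r` containing `v`. -/
noncomputable def ekrStar [Fintype V] (G : SimpleGraph V) (r : ℕ) (v : V) : Finset (Finset V) :=
  (indepSetsSize G r).filter fun A => v ∈ A

/-- A family of sets is pairwise intersecting. -/
def PairwiseIntersecting (𝒜 : Finset (Finset V)) : Prop :=
  ∀ A ∈ 𝒜, ∀ B ∈ 𝒜, (A ∩ B).Nonempty

/-- `G` is `r`-EKR: no pairwise intersecting subfamily of `I^(r)(G)` is larger than the
largest `r`-star. -/
def IsEKR [Fintype V] (G : SimpleGraph V) (r : ℕ) : Prop :=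
  ∀ 𝒜 ⊆ indepSetsSize G r, PairwiseIntersecting 𝒜 → ∃ v, 𝒜.card ≤ (ekrStar G r v).card

/-- `G` is strictly `r`-EKR: `r`-EKR, and every maximum-size pairwise intersecting
subfamily of `I^(r)(G)` is an `r`-star. -/
def IsStrictEKR [Fintype V] (G : SimpleGraph V) (r : ℕ) : Prop :=
  IsEKR G r ∧ ∀ 𝒜 ⊆ indepSetsSize G r, PairwiseIntersecting 𝒜 →
    (∀ ℬ ⊆ indepSetsSize G r, PairwiseIntersecting ℬ → ℬ.card ≤ 𝒜.card) →
    ∃ v, 𝒜 = ekrStar G r v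

/-- An elongated claw: a tree with a designated root in which every vertex other than
the root has degree at most 2. -/
def IsElongatedClaw [Fintype V] (G : SimpleGraph V) (root : V) : Prop :=
  G.IsTree ∧ ∀ v, v ≠ root → G.degree v ≤ 2

/-- A depth-two claw: an elongated claw in which every leaf is at distance 2 from the root. -/
def IsDepthTwoClaw [Fintype V] (G : SimpleGraph V) (root : V) : Prop :=
  IsElongatedClaw G root ∧ ∀ v, G.degree v = 1 → G.dist root v = 2

/-- The minimum size of a maximal independent set of `G`, i.e. `μ(G)`. -/
noncomputable def graphMu [Fintype V] (G : SimpleGraph V) : ℕ :=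
  sInf {m | ∃ A ∈ indepSets G, (∀ B ∈ indepSets G, A ⊆ B → B = A) ∧ A.card = m}

/-
Label the limbs of the claw `c – x i – y i`, for `n` limbs. An intersecting family of independent
`r`-sets is compressed along the edges `x i y i`, replacing `x i` by `y i`. Afterwards any two
members meet outside `X = {x i}`, so the traces `A \ X` of size `k` form an intersecting family of
`k`-subsets of the leaves (together with the root if `k = r`), to which the Erdős–Ko–Rado theorem
applies. Each trace of size `k` comes from `(n - k).choose (r - k)` independent `r`-sets, and the
resulting bounds are attained for every `k` at once by the star of a leaf; since `X` is a maximal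
independent set, `n ≥ μ(G) ≥ 2r - 1`.

In case of equality the trace size `k = 1` must occur, which forces the compressed family to be the
star of some leaf `y j`. Compression does not move the sets containing the root, so the original
family contains all `r`-sets `{c, y j} ∪ S` with `S` a set of leaves. They are numerous enough that
every member of the family has to contain `y j`.
-/

open scoped FinsetFamily

section SetFamilies

theorem card_le_choose_of_pairwiseIntersecting {S : Finset V} {k : ℕ} {𝒜 : Finset (Finset V)}
    (h𝒜 : 𝒜 ⊆ powersetCard k S) (hint : PairwiseIntersecting 𝒜) (hk : 2 * k ≤ #S) :
    #𝒜 ≤ (#S - 1).choose (k - 1) := by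
  let f : Fin #S ↪ V := S.equivFin.symm.toEmbedding.trans (.subtype _)
  have hf : univ.map f = S := by
    rw [← Finset.map_map, map_univ_equiv, univ_eq_attach, attach_map_val]
  let ℬ : Finset (Finset (Fin #S)) := {B | B.map f ∈ 𝒜}
  have hℬ : ℬ.map (mapEmbedding f).toEmbedding = 𝒜 := by
    ext A
    simp only [ℬ, mem_map, mem_filter_univ, RelEmbedding.coe_toEmbedding, mapEmbedding_apply]
    refine ⟨by rintro ⟨B, hB, rfl⟩; exact hB, fun hA => ?_⟩
    obtain ⟨B, -, rfl⟩ := subset_map_iff.1 (hf.symm ▸ (mem_powersetCard.1 (h𝒜 hA)).1)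
    exact ⟨B, hA, rfl⟩
  rw [← hℬ, card_map]
  refine erdos_ko_rado (fun A hA B hB hAB => ?_) (fun A hA => ?_) (by omega)
  · exact not_disjoint_iff_nonempty_inter.2
      (hint _ ((mem_filter_univ A).1 hA) _ ((mem_filter_univ B).1 hB)) ((disjoint_map f).2 hAB)
  · rw [← card_map f]
    exact (mem_powersetCard.1 (h𝒜 ((mem_filter_univ A).1 hA))).2

/-- Any two members of `𝒜` meet outside `T`; for `T = ∅` this is `PairwiseIntersecting`. -/
def IntersectingOff (T : Finset V) (𝒜 : Finset (Finset V)) : Prop :=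
  ∀ A ∈ 𝒜, ∀ B ∈ 𝒜, ((A ∩ B) \ T).Nonempty

theorem IntersectingOff.sdiff_nonempty {T A : Finset V} {𝒜 : Finset (Finset V)}
    (h : IntersectingOff T 𝒜) (hA : A ∈ 𝒜) : (A \ T).Nonempty := by
  simpa only [inter_self] using h A hA A hA

theorem IntersectingOff.pairwiseIntersecting_image_sdiff {T : Finset V} {𝒜 : Finset (Finset V)}
    (h : IntersectingOff T 𝒜) : PairwiseIntersecting (𝒜.image (· \ T)) := by
  simp only [PairwiseIntersecting, forall_mem_image]
  intro A hA B hB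
  obtain ⟨z, hz⟩ := h A hA B hB
  exact ⟨z, by grind⟩

theorem mem_or_swap_mem_of_mem_compression {a b : V} {𝒜 : Finset (Finset V)} {A : Finset V}
    (hab : ∀ A ∈ 𝒜, a ∈ A → b ∉ A) (hA : A ∈ 𝓒 {b} {a} 𝒜) :
    (A ∈ 𝒜 ∧ (a ∈ A → (A ∪ {b}) \ {a} ∈ 𝒜)) ∨ (b ∈ A ∧ a ∉ A ∧ (A ∪ {a}) \ {b} ∈ 𝒜) := by
  by_cases hA𝒜 : A ∈ 𝒜
  · refine .inl ⟨hA𝒜, fun ha => ?_⟩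
    exact UV.sup_sdiff_mem_of_mem_compression hA (singleton_subset_iff.2 ha)
      (disjoint_singleton_left.2 (hab A hA𝒜 ha))
  · exact .inr ⟨singleton_subset_iff.1 (UV.le_of_mem_compression_of_notMem hA hA𝒜),
      disjoint_singleton_left.1 (UV.disjoint_of_mem_compression_of_notMem hA hA𝒜),
      UV.sup_sdiff_mem_of_mem_compression_of_notMem hA hA𝒜⟩

theorem IntersectingOff.compression {T : Finset V} {a b : V} {𝒜 : Finset (Finset V)}
    (h : IntersectingOff T 𝒜) (hb : b ∉ T) (hab : ∀ A ∈ 𝒜, a ∈ A → b ∉ A) :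
    IntersectingOff (insert a T) (𝓒 {b} {a} 𝒜) := by
  have fixed_fixed {A B} (hA : A ∈ 𝒜) (hB : B ∈ 𝒜) (hB' : a ∈ B → (B ∪ {b}) \ {a} ∈ 𝒜) :
      ((A ∩ B) \ insert a T).Nonempty := by
    by_cases haAB : a ∈ A ∧ a ∈ B
    · have hbA := hab A hA haAB.1
      obtain ⟨z, hz⟩ := h _ hA _ (hB' haAB.2)
      exact ⟨z, by clear h hab; grind⟩
    · obtain ⟨z, hz⟩ := h _ hA _ hB
      exact ⟨z, by clear h hab; grind⟩
  have moved_fixed {A B} (haA : a ∉ A) (hA : (A ∪ {a}) \ {b} ∈ 𝒜) (hB : B ∈ 𝒜)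
      (hB' : a ∈ B → (B ∪ {b}) \ {a} ∈ 𝒜) : ((A ∩ B) \ insert a T).Nonempty := by
    by_cases haB : a ∈ B
    · obtain ⟨z, hz⟩ := h _ hA _ (hB' haB)
      exact ⟨z, by clear h hab fixed_fixed; grind⟩
    · obtain ⟨z, hz⟩ := h _ hA _ hB
      exact ⟨z, by clear h hab fixed_fixed; grind⟩
  intro A hA B hB
  rcases mem_or_swap_mem_of_mem_compression hab hA with ⟨hA, hA'⟩ | ⟨hbA, haA, hA⟩ <;>
    rcases mem_or_swap_mem_of_mem_compression hab hB with ⟨hB, hB'⟩ | ⟨hbB, haB, hB⟩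
  · exact fixed_fixed hA hB hB'
  · rw [inter_comm]
    exact moved_fixed haB hB hA hA'
  · exact moved_fixed haA hA hB hB'
  · have hbT : b ∉ insert a T := by
      simpa only [mem_insert, not_or] using ⟨ne_of_mem_of_not_mem hbA haA, hb⟩
    exact ⟨b, mem_sdiff.2 ⟨mem_inter.2 ⟨hbA, hbB⟩, hbT⟩⟩

end SetFamilies

section IndependentSets

variable [Fintype V] {G : SimpleGraph V} {r : ℕ} {A : Finset V} {𝒜 : Finset (Finset V)}

theorem mem_indepSets : A ∈ indepSets G ↔ ∀ u ∈ A, ∀ v ∈ A, ¬ G.Adj u v := by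
  simp only [indepSets, mem_filter_univ]

theorem mem_indepSetsSize : A ∈ indepSetsSize G r ↔ A ∈ indepSets G ∧ #A = r := by
  simp only [indepSetsSize, mem_filter]

theorem mem_ekrStar {v : V} : A ∈ ekrStar G r v ↔ A ∈ indepSetsSize G r ∧ v ∈ A := by
  simp only [ekrStar, mem_filter]

theorem ekrStar_subset (v : V) : ekrStar G r v ⊆ indepSetsSize G r :=
  filter_subset _ _

theorem intersectingOff_ekrStar {T : Finset V} {v : V} (hv : v ∉ T) :
    IntersectingOff T (ekrStar G r v) := fun _ hA _ hB =>
  ⟨v, mem_sdiff.2 ⟨mem_inter.2 ⟨(mem_ekrStar.1 hA).2, (mem_ekrStar.1 hB).2⟩, hv⟩⟩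

theorem pairwiseIntersecting_ekrStar (v : V) : PairwiseIntersecting (ekrStar G r v) :=
  fun _ hA _ hB => ⟨v, mem_inter.2 ⟨(mem_ekrStar.1 hA).2, (mem_ekrStar.1 hB).2⟩⟩

theorem isStrictEKR_of_le_card_ekrStar (v : V)
    (hle : ∀ 𝒜 ⊆ indepSetsSize G r, PairwiseIntersecting 𝒜 → #𝒜 ≤ #(ekrStar G r v))
    (heq : ∀ 𝒜 ⊆ indepSetsSize G r, PairwiseIntersecting 𝒜 → #(ekrStar G r v) ≤ #𝒜 →
      ∃ w, 𝒜 = ekrStar G r w) :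
    IsStrictEKR G r :=
  ⟨fun 𝒜 h𝒜 hint => ⟨v, hle 𝒜 h𝒜 hint⟩, fun 𝒜 h𝒜 hint hmax =>
    heq 𝒜 h𝒜 hint (hmax _ (ekrStar_subset v) (pairwiseIntersecting_ekrStar v))⟩

theorem ekrStar_one (v : V) : ekrStar G 1 v = {{v}} := by
  ext A
  simp only [mem_ekrStar, mem_indepSetsSize, mem_indepSets, mem_singleton]
  constructor
  · rintro ⟨⟨-, hA⟩, hv⟩
    obtain ⟨w, rfl⟩ := card_eq_one.1 hA
    rw [mem_singleton.1 hv]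
  · rintro rfl
    simp

theorem exists_eq_ekrStar_one (h𝒜 : 𝒜 ⊆ indepSetsSize G 1) (hint : PairwiseIntersecting 𝒜)
    (hne : 𝒜.Nonempty) : ∃ v, 𝒜 = ekrStar G 1 v := by
  obtain ⟨A, hA⟩ := hne
  obtain ⟨v, rfl⟩ := card_eq_one.1 (mem_indepSetsSize.1 (h𝒜 hA)).2
  refine ⟨v, (ekrStar_one v).symm ▸ Subset.antisymm (fun B hB => ?_) (singleton_subset_iff.2 hA)⟩
  obtain ⟨w, rfl⟩ := card_eq_one.1 (mem_indepSetsSize.1 (h𝒜 hB)).2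
  obtain ⟨z, hz⟩ := hint _ hA _ hB
  grind

theorem isStrictEKR_one [Nonempty V] (G : SimpleGraph V) : IsStrictEKR G 1 := by
  inhabit V
  refine isStrictEKR_of_le_card_ekrStar default (fun 𝒜 h𝒜 hint => ?_) fun 𝒜 h𝒜 hint hcard => ?_
  · rcases 𝒜.eq_empty_or_nonempty with rfl | hne
    · simp
    · obtain ⟨v, rfl⟩ := exists_eq_ekrStar_one h𝒜 hint hne
      simp only [ekrStar_one, card_singleton, le_refl]
  · refine exists_eq_ekrStar_one h𝒜 hint (card_pos.1 ?_)
    rwa [ekrStar_one, card_singleton] at hcard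

theorem graphMu_le_card_of_dominating (hA : A ∈ indepSets G)
    (hdom : ∀ v ∉ A, ∃ u ∈ A, G.Adj u v) : graphMu G ≤ #A := by
  refine Nat.sInf_le ⟨A, hA, fun B hB hAB => Subset.antisymm (fun v hv => ?_) hAB, rfl⟩
  by_contra hvA
  obtain ⟨u, hu, huv⟩ := hdom v hvA
  exact mem_indepSets.1 hB u (hAB hu) v hv huv

theorem notMem_of_mem_indepSetsSize_of_adj {u v : V} (hA : A ∈ indepSetsSize G r)
    (huv : G.Adj u v) (hu : u ∈ A) : v ∉ A := fun hv =>
  mem_indepSets.1 (mem_indepSetsSize.1 hA).1 u hu v hv huv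

theorem compression_subset_indepSetsSize {a b : V} (hab : G.Adj a b)
    (hb : ∀ v, G.Adj b v → v = a) (h𝒜 : 𝒜 ⊆ indepSetsSize G r) :
    𝓒 {b} {a} 𝒜 ⊆ indepSetsSize G r := by
  intro A hA
  have hsized : (𝒜 : Set (Finset V)).Sized r := fun B hB => (mem_indepSetsSize.1 (h𝒜 hB)).2
  have hcard : #A = r := hsized.uvCompression (by simp) hA
  rcases mem_or_swap_mem_of_mem_compression
    (fun B hB => notMem_of_mem_indepSetsSize_of_adj (h𝒜 hB) hab) hA with ⟨hA, -⟩ | ⟨-, haA, hA⟩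
  · exact h𝒜 hA
  have hswap := mem_indepSets.1 (mem_indepSetsSize.1 (h𝒜 hA)).1
  refine mem_indepSetsSize.2 ⟨mem_indepSets.2 fun u hu v hv huv => ?_, hcard⟩
  have hub : u ≠ b := by rintro rfl; exact haA (hb v huv ▸ hv)
  have hvb : v ≠ b := by rintro rfl; exact haA (hb u huv.symm ▸ hu)
  exact hswap u (by grind) v (by grind) huv

theorem mem_compression_iff_of_adj {a b c : V} (hca : G.Adj c a) (hcb : c ≠ b) (hab : G.Adj a b)
    (h𝒜 : 𝒜 ⊆ indepSetsSize G r) (hc : c ∈ A) : A ∈ 𝓒 {b} {a} 𝒜 ↔ A ∈ 𝒜 := by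
  refine ⟨fun hA => ?_, fun hA => ?_⟩
  · rcases mem_or_swap_mem_of_mem_compression
      (fun B hB => notMem_of_mem_indepSetsSize_of_adj (h𝒜 hB) hab) hA with ⟨hA, -⟩ | ⟨-, -, hA⟩
    · exact hA
    · have haA := notMem_of_mem_indepSetsSize_of_adj (h𝒜 hA) hca (by grind)
      exact absurd hab.ne (by grind)
  · have haA := notMem_of_mem_indepSetsSize_of_adj (h𝒜 hA) hca hc
    have hfix : UV.compress {b} {a} A = A :=
      if_neg fun h => haA (singleton_subset_iff.1 h.2)
    exact UV.mem_compression.2 (.inl ⟨hA, hfix.symm ▸ hA⟩)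

end IndependentSets

/-- A labelling of `G` as a depth-two claw: the limbs are the paths `c – x i – y i`, indexed by an
arbitrary type `I` (which is empty when `G` is a single vertex). -/
structure IsClawLabelling {I : Type*} (G : SimpleGraph V) (c : V) (x y : I → V) : Prop where
  x_injective : Function.Injective x
  y_injective : Function.Injective y
  x_ne_y : ∀ i j, x i ≠ y j
  y_ne_root : ∀ i, y i ≠ c
  cover : ∀ v, v = c ∨ (∃ i, v = x i) ∨ ∃ i, v = y i
  adj_iff : ∀ u v, G.Adj u v ↔ ∃ i, s(u, v) = s(c, x i) ∨ s(u, v) = s(x i, y i)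

section Trees

variable {G : SimpleGraph V} {c : V}

theorem eq_of_adj_of_dist_eq_add_one (hG : G.IsTree) {u u' v : V} (h : G.Adj u v)
    (h' : G.Adj u' v) (hd : G.dist c v = G.dist c u + 1) (hd' : G.dist c v = G.dist c u' + 1) :
    u = u' := by
  obtain ⟨p, hp⟩ := hG.connected.exists_walk_length_eq_dist c u
  obtain ⟨p', hp'⟩ := hG.connected.exists_walk_length_eq_dist c u'
  have hpath : (p.concat h).IsPath := Walk.isPath_of_length_eq_dist _ (by simp [hp, hd])
  have hpath' : (p'.concat h').IsPath := Walk.isPath_of_length_eq_dist _ (by simp [hp', hd'])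
  exact (Walk.concat_inj ((hG.existsUnique_path c v).unique hpath hpath')).1

theorem exists_adj_dist_eq_add_one (hG : G.Connected) {v : V} (hv : v ≠ c) :
    ∃ u, G.Adj u v ∧ G.dist c v = G.dist c u + 1 := by
  obtain ⟨p, hp⟩ := hG.exists_walk_length_eq_dist v c
  cases p with
  | nil => exact absurd rfl hv
  | @cons _ u _ hvu q =>
    refine ⟨u, hvu.symm, ?_⟩
    have hle : G.dist u c ≤ q.length := dist_le q
    have htri : G.dist v c ≤ G.dist v u + G.dist u c := hG.dist_triangle
    rw [Walk.length_cons] at hp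
    rw [dist_eq_one_iff_adj.2 hvu] at htri
    rw [dist_comm (u := c), dist_comm (u := c)]
    omega

theorem dist_eq_two_of_adj_of_adj (hG : G.IsTree) {v w : V} (hcv : G.Adj c v) (hvw : G.Adj v w)
    (hw : w ≠ c) : G.dist c w = 2 := by
  have hdist_v : G.dist c v = 1 := dist_eq_one_iff_adj.2 hcv
  have hdist_w : G.dist c w ≠ 0 := hG.connected.dist_eq_zero_iff.not.2 hw.symm
  have := hG.dist_eq_dist_add_one_of_adj c hvw
  omega

variable [Fintype V]

theorem exists_degree_eq_one_forall_dist_le [Nontrivial V] (hG : G.IsTree) (c : V) :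
    ∃ m, G.degree m = 1 ∧ ∀ v, G.dist c v ≤ G.dist c m := by
  obtain ⟨m, -, hm⟩ := exists_max_image univ (G.dist c) ⟨c, mem_univ c⟩
  have parent : ∀ u ∈ G.neighborFinset m, G.Adj u m ∧ G.dist c m = G.dist c u + 1 := by
    intro u hu
    rw [mem_neighborFinset] at hu
    have hum := hm u (mem_univ u)
    exact ⟨hu.symm, (hG.dist_eq_dist_add_one_of_adj c hu).resolve_right (by omega)⟩
  have hle : G.degree m ≤ 1 := card_le_one.2 fun u hu u' hu' =>
    eq_of_adj_of_dist_eq_add_one hG (parent u hu).1 (parent u' hu').1 (parent u hu).2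
      (parent u' hu').2
  have hpos : 0 < G.degree m := hG.connected.preconnected.degree_pos_of_nontrivial m
  exact ⟨m, by omega, fun v => hm v (mem_univ v)⟩

namespace IsDepthTwoClaw

theorem dist_le_two (hG : IsDepthTwoClaw G c) (v : V) : G.dist c v ≤ 2 := by
  rcases subsingleton_or_nontrivial V with hV | hV
  · simp only [Subsingleton.elim v c, dist_self, zero_le]
  · obtain ⟨m, hdeg, hmax⟩ := exists_degree_eq_one_forall_dist_le hG.1.1 c
    exact (hmax v).trans (hG.2 m hdeg).le

theorem exists_adj_iff_of_adj (hG : IsDepthTwoClaw G c) {v : V} (hv : G.Adj c v) :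
    ∃ w, w ≠ c ∧ ∀ z, G.Adj v z ↔ z = c ∨ z = w := by
  have hdist : G.dist c v = 1 := dist_eq_one_iff_adj.2 hv
  have hle : G.degree v ≤ 2 := hG.1.2 v hv.ne'
  have hne_one : G.degree v ≠ 1 := fun h => by have := hG.2 v h; omega
  have hc : c ∈ G.neighborFinset v := (mem_neighborFinset _ _ _).2 hv.symm
  have hpos : 0 < G.degree v := card_pos.2 ⟨c, hc⟩
  have hcard : #((G.neighborFinset v).erase c) = 1 := by
    rw [card_erase_of_mem hc, card_neighborFinset_eq_degree]
    omega
  obtain ⟨w, hw⟩ := card_eq_one.1 hcard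
  have hnbr : G.neighborFinset v = {c, w} := by rw [← insert_erase hc, hw]
  refine ⟨w, ne_of_mem_erase (hw ▸ mem_singleton_self w), fun z => ?_⟩
  rw [← mem_neighborFinset, hnbr, mem_insert, mem_singleton]

theorem adj_or_exists_adj_adj (hG : IsDepthTwoClaw G c) {v : V} (hv : v ≠ c) :
    G.Adj c v ∨ ∃ u, G.Adj c u ∧ G.Adj u v := by
  have hconn := hG.1.1.connected
  obtain ⟨u, huv, hd⟩ := exists_adj_dist_eq_add_one hconn hv
  rcases eq_or_ne u c with rfl | huc
  · exact .inl huv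
  · have hu : G.dist c u ≠ 0 := hconn.dist_eq_zero_iff.not.2 huc.symm
    have := hG.dist_le_two v
    exact .inr ⟨u, dist_eq_one_iff_adj.1 (by omega), huv⟩

theorem exists_isClawLabelling (hG : IsDepthTwoClaw G c) :
    ∃ y : {v // G.Adj c v} → V, IsClawLabelling G c (↑) y := by
  have hT := hG.1.1
  choose y hyc hadj using fun i : {v // G.Adj c v} => hG.exists_adj_iff_of_adj i.2
  have hxy (i : {v // G.Adj c v}) : G.Adj i (y i) := (hadj i _).2 (.inr rfl)
  have hdist_x (i : {v // G.Adj c v}) : G.dist c i = 1 := dist_eq_one_iff_adj.2 i.2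
  have hdist_y (i : {v // G.Adj c v}) : G.dist c (y i) = 2 :=
    dist_eq_two_of_adj_of_adj hT i.2 (hxy i) (hyc i)
  have cover (v : V) : v = c ∨ (∃ i : {v // G.Adj c v}, v = i) ∨ ∃ i, v = y i := by
    refine or_iff_not_imp_left.2 fun hvc => ?_
    rcases hG.adj_or_exists_adj_adj hvc with hv | ⟨u, hu, huv⟩
    · exact .inl ⟨⟨v, hv⟩, rfl⟩
    · exact .inr ⟨⟨u, hu⟩, ((hadj ⟨u, hu⟩ v).1 huv).resolve_left hvc⟩
  refine ⟨y, Subtype.val_injective, fun i j hij => Subtype.ext ?_, fun i j hij => ?_, hyc, cover,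
    fun u v => ⟨fun huv => ?_, ?_⟩⟩
  · refine eq_of_adj_of_dist_eq_add_one hT (hxy i) (hij ▸ hxy j) ?_ ?_ (c := c) <;>
      rw [hdist_y, hdist_x]
  · exact absurd (hij ▸ hdist_x i) (by rw [hdist_y]; decide)
  · rcases cover u with rfl | ⟨i, rfl⟩ | ⟨i, rfl⟩
    · exact ⟨⟨v, huv⟩, .inl rfl⟩
    · exact ⟨i, ((hadj i v).1 huv).imp (by rintro rfl; exact Sym2.eq_swap) (by rintro rfl; rfl)⟩
    · have hv : G.Adj c v := dist_eq_one_iff_adj.1 <| by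
        have := hdist_y i
        have := hG.dist_le_two v
        have := hT.dist_eq_dist_add_one_of_adj c huv
        omega
      exact ⟨⟨v, hv⟩, .inr (((hadj ⟨v, hv⟩ _).1 huv.symm).resolve_left (hyc i) ▸ Sym2.eq_swap)⟩
  · rintro ⟨i, h | h⟩
    · exact (mem_edgeSet G).1 (h ▸ (mem_edgeSet G).2 i.2)
    · exact (mem_edgeSet G).1 (h ▸ (mem_edgeSet G).2 (hxy i))

end IsDepthTwoClaw

end Trees

/-- The vertices that can occur in a trace `A \ {x i}` of size `k` of an independent `r`-set `A` of
the claw: the leaves, and for `k = r` also the root, whose presence excludes every `x i` from `A`.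
-/
noncomputable def traceGround {I : Type*} [Fintype I] (c : V) (y : I → V) (r k : ℕ) :
    Finset V :=
  if k = r then insert c (univ.image y) else univ.image y

namespace IsClawLabelling

section Adjacency

variable {I : Type*} {G : SimpleGraph V} {c : V} {x y : I → V}

theorem root_adj (h : IsClawLabelling G c x y) (i : I) : G.Adj c (x i) :=
  (h.adj_iff _ _).2 ⟨i, .inl rfl⟩

theorem x_adj_y (h : IsClawLabelling G c x y) (i : I) : G.Adj (x i) (y i) :=
  (h.adj_iff _ _).2 ⟨i, .inr rfl⟩

theorem eq_x_of_y_adj (h : IsClawLabelling G c x y) {i : I} {v : V} (hv : G.Adj (y i) v) :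
    v = x i := by
  obtain ⟨j, hj | hj⟩ := (h.adj_iff _ _).1 hv
  · rcases Sym2.eq_iff.1 hj with ⟨hy, -⟩ | ⟨hy, -⟩
    · exact absurd hy (h.y_ne_root i)
    · exact absurd hy.symm (h.x_ne_y j i)
  · rcases Sym2.eq_iff.1 hj with ⟨hy, -⟩ | ⟨hy, hv⟩
    · exact absurd hy.symm (h.x_ne_y j i)
    · rw [hv, h.y_injective hy]

variable [Fintype V] {A : Finset V}

theorem mem_indepSets_iff (h : IsClawLabelling G c x y) :
    A ∈ indepSets G ↔ ∀ i, x i ∈ A → c ∉ A ∧ y i ∉ A := by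
  rw [mem_indepSets]
  refine ⟨fun hA i hx => ⟨fun hc => hA c hc _ hx (h.root_adj i),
    fun hy => hA _ hx _ hy (h.x_adj_y i)⟩, fun hA u hu v hv huv => ?_⟩
  obtain ⟨i, hi | hi⟩ := (h.adj_iff u v).1 huv <;>
    rcases Sym2.eq_iff.1 hi with ⟨rfl, rfl⟩ | ⟨rfl, rfl⟩
  · exact (hA i hv).1 hu
  · exact (hA i hu).1 hv
  · exact (hA i hu).2 hv
  · exact (hA i hv).2 hu

theorem mem_indepSets_of_forall_x_notMem (h : IsClawLabelling G c x y) (hA : ∀ i, x i ∉ A) :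
    A ∈ indepSets G :=
  h.mem_indepSets_iff.2 fun i hi => absurd hi (hA i)

theorem exists_intersectingOff_image {r : ℕ} {𝒜 : Finset (Finset V)}
    (h : IsClawLabelling G c x y) (h𝒜 : 𝒜 ⊆ indepSetsSize G r) (hint : PairwiseIntersecting 𝒜)
    (S : Finset I) :
    ∃ ℱ ⊆ indepSetsSize G r, IntersectingOff (S.image x) ℱ ∧ #ℱ = #𝒜 ∧
      ∀ A, c ∈ A → (A ∈ ℱ ↔ A ∈ 𝒜) := by
  induction S using Finset.induction_on with
  | empty =>
    refine ⟨𝒜, h𝒜, fun A hA B hB => ?_, rfl, fun A _ => .rfl⟩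
    rw [image_empty, sdiff_empty]
    exact hint A hA B hB
  | insert i S _ ih =>
    obtain ⟨ℱ, hℱ, hoff, hcard, hroot⟩ := ih
    have hy : y i ∉ S.image x := by
      simp only [mem_image, not_exists, not_and]
      exact fun j _ => h.x_ne_y j i
    refine ⟨𝓒 {y i} {x i} ℱ,
      compression_subset_indepSetsSize (h.x_adj_y i) (fun _ => h.eq_x_of_y_adj) hℱ, ?_,
      (UV.card_compression _ _ _).trans hcard, fun A hA => ?_⟩
    · rw [image_insert]
      exact hoff.compression hy fun A hA => notMem_of_mem_indepSetsSize_of_adj (hℱ hA) (h.x_adj_y i)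
    · rw [mem_compression_iff_of_adj (h.root_adj i) (h.y_ne_root i).symm (h.x_adj_y i) hℱ hA,
        hroot A hA]

theorem graphMu_le_one_of_isEmpty [IsEmpty I] (h : IsClawLabelling G c x y) : graphMu G ≤ 1 := by
  refine graphMu_le_card_of_dominating (A := {c})
    (h.mem_indepSets_of_forall_x_notMem isEmptyElim) fun v hv => ?_
  have hvc : v ≠ c := fun hvc => hv (mem_singleton.2 hvc)
  rcases (h.cover v).resolve_left hvc with ⟨i, -⟩ | ⟨i, -⟩ <;> exact isEmptyElim i

variable [Fintype I]

theorem graphMu_le_card [Nonempty I] (h : IsClawLabelling G c x y) :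
    graphMu G ≤ Fintype.card I := by
  rw [← card_univ, ← card_image_of_injective univ h.x_injective]
  refine graphMu_le_card_of_dominating (h.mem_indepSets_iff.2 fun i _ => ⟨?_, ?_⟩) fun v hv => ?_
  · simp only [mem_image_univ_iff_mem_range, Set.mem_range, not_exists]
    exact fun j => (h.root_adj j).ne'
  · simp only [mem_image_univ_iff_mem_range, Set.mem_range, not_exists]
    exact fun j => h.x_ne_y j i
  · rcases h.cover v with rfl | ⟨i, rfl⟩ | ⟨i, rfl⟩
    · inhabit I
      exact ⟨x default, mem_image_of_mem x (mem_univ _), (h.root_adj default).symm⟩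
    · exact absurd (mem_image_of_mem x (mem_univ i)) hv
    · exact ⟨x i, mem_image_of_mem x (mem_univ i), h.x_adj_y i⟩

end Adjacency

section Traces

variable {I : Type*} [Fintype I] {G : SimpleGraph V} {c : V} {x y : I → V} {r k : ℕ}

theorem y_notMem_image_x (h : IsClawLabelling G c x y) (j : I) : y j ∉ univ.image x := by
  simp only [mem_image, mem_univ, true_and, not_exists]
  exact fun i => h.x_ne_y i j

theorem x_notMem_traceGround (h : IsClawLabelling G c x y) (i : I) :
    x i ∉ traceGround c y r k := by
  have hroot := (h.root_adj i).ne'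
  have hleaf := h.x_ne_y i
  simp only [traceGround]
  grind

theorem y_mem_traceGround (c : V) (y : I → V) (r k : ℕ) (j : I) : y j ∈ traceGround c y r k := by
  simp only [traceGround]
  grind

theorem two_mul_le_card_traceGround (h : IsClawLabelling G c x y) (hk : k ≤ r)
    (hr : 2 * r ≤ Fintype.card I + 1) : 2 * k ≤ #(traceGround c y r k) := by
  have hcard : #(univ.image y) = Fintype.card I := card_image_of_injective _ h.y_injective
  have hroot : c ∉ univ.image y := by
    simpa only [mem_image, mem_univ, true_and, not_exists] using h.y_ne_root
  unfold traceGround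
  split_ifs
  · rw [card_insert_of_notMem hroot]
    omega
  · omega

theorem card_filter_x_mem_add_card_sdiff (h : IsClawLabelling G c x y) (A : Finset V) :
    #{i | x i ∈ A} + #(A \ univ.image x) = #A := by
  have himage : image x {i | x i ∈ A} = A ∩ univ.image x := by
    ext v
    grind
  rw [← card_image_of_injective _ h.x_injective, himage, card_inter_add_card_sdiff]

theorem card_filter_y_notMem (h : IsClawLabelling G c x y) {K : Finset V}
    (hK : K ⊆ univ.image y) :
    #{i | y i ∉ K} = Fintype.card I - #K := by
  have himage : image y {i | y i ∈ K} = K := by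
    ext v
    grind
  have hsum := card_filter_add_card_filter_not (s := univ) (fun i => y i ∈ K)
  rw [← card_image_of_injective _ h.y_injective, himage, card_univ] at hsum
  omega

variable [Fintype V] {A K : Finset V} {ℱ : Finset (Finset V)}

theorem sdiff_subset_traceGround (h : IsClawLabelling G c x y) (hA : A ∈ indepSetsSize G r) :
    A \ univ.image x ⊆ traceGround c y r #(A \ univ.image x) := by
  obtain ⟨hindep, hcard⟩ := mem_indepSetsSize.1 hA
  intro v hv
  rcases h.cover v with rfl | ⟨i, rfl⟩ | ⟨i, rfl⟩
  · have hdisj : Disjoint A (univ.image x) := disjoint_left.2 fun u hu hux => by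
      obtain ⟨i, -, rfl⟩ := mem_image.1 hux
      exact (h.mem_indepSets_iff.1 hindep i hu).1 (mem_sdiff.1 hv).1
    rw [sdiff_eq_self_of_disjoint hdisj, hcard, traceGround, if_pos rfl]
    exact mem_insert_self _ _
  · exact absurd (mem_image_of_mem x (mem_univ i)) (mem_sdiff.1 hv).2
  · exact y_mem_traceGround _ _ _ _ i

theorem filter_sdiff_eq_singleton (h : IsClawLabelling G c x y) (hK : ∀ i, x i ∉ K)
    (hcard : #K = r) : {A ∈ indepSetsSize G r | A \ univ.image x = K} = {K} := by
  have hdisj : Disjoint K (univ.image x) := disjoint_right.2 fun v hv => by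
    obtain ⟨i, -, rfl⟩ := mem_image.1 hv
    exact hK i
  simp only [eq_singleton_iff_unique_mem, mem_filter, mem_indepSetsSize]
  refine ⟨⟨⟨h.mem_indepSets_of_forall_x_notMem hK, hcard⟩, sdiff_eq_self_of_disjoint hdisj⟩, ?_⟩
  rintro A ⟨⟨-, hA⟩, rfl⟩
  exact (eq_of_subset_of_card_le sdiff_subset (hA.trans hcard.symm).le).symm

theorem union_image_mem_indepSets (h : IsClawLabelling G c x y) {R : Finset I}
    (hK : K ⊆ univ.image y) (hR : ∀ i ∈ R, y i ∉ K) : K ∪ R.image x ∈ indepSets G := by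
  refine h.mem_indepSets_iff.2 fun i hi => ?_
  have hroot (j : I) : x j ≠ c := (h.root_adj j).ne'
  have hinj := h.x_injective
  have hxy := h.x_ne_y
  have hyc := h.y_ne_root
  grind [Function.Injective]

theorem card_filter_sdiff_eq_choose_of_subset_image (h : IsClawLabelling G c x y)
    (hK : K ⊆ univ.image y) (hcard : #K ≤ r) :
    #{A ∈ indepSetsSize G r | A \ univ.image x = K} =
      (Fintype.card I - #K).choose (r - #K) := by
  have hxK (i : I) : x i ∉ K := fun hi => by
    obtain ⟨j, -, hj⟩ := mem_image.1 (hK hi)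
    exact h.x_ne_y i j hj.symm
  have hx_mem (R : Finset I) (i : I) : x i ∈ K ∪ R.image x ↔ i ∈ R := by
    rw [mem_union, h.x_injective.mem_finset_image, or_iff_right (hxK i)]
  have hsdiff (R : Finset I) : (K ∪ R.image x) \ univ.image x = K := by
    ext v
    grind
  rw [← h.card_filter_y_notMem hK, ← card_powersetCard]
  refine card_nbij' (fun A => ({i | x i ∈ A} : Finset I)) (fun R => K ∪ R.image x)
    (fun A hA => ?_) (fun R hR => ?_) (fun A hA => ?_) (fun R _ => ?_)
  · simp only [mem_coe, mem_filter, mem_indepSetsSize] at hA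
    obtain ⟨⟨hindep, rfl⟩, rfl⟩ := hA
    refine mem_powersetCard.2 ⟨fun i hi => (mem_filter_univ i).2 fun hy => ?_,
      Nat.eq_sub_of_add_eq (h.card_filter_x_mem_add_card_sdiff A)⟩
    exact (h.mem_indepSets_iff.1 hindep i ((mem_filter_univ i).1 hi)).2 (mem_sdiff.1 hy).1
  · obtain ⟨hR, hRcard⟩ := mem_powersetCard.1 hR
    have hindep : K ∪ R.image x ∈ indepSets G :=
      h.union_image_mem_indepSets hK fun i hi => (mem_filter_univ i).1 (hR hi)
    have hsize := h.card_filter_x_mem_add_card_sdiff (K ∪ R.image x)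
    simp only [hx_mem, hsdiff, filter_univ_mem] at hsize
    simp only [mem_coe, mem_filter, mem_indepSetsSize]
    exact ⟨⟨hindep, by omega⟩, hsdiff R⟩
  · simp only [mem_coe, mem_filter] at hA
    obtain ⟨-, rfl⟩ := hA
    ext v
    grind
  · simp only [hx_mem, filter_univ_mem]

theorem card_filter_sdiff_eq_choose (h : IsClawLabelling G c x y)
    (hK : K ⊆ traceGround c y r #K) (hcard : #K ≤ r) :
    #{A ∈ indepSetsSize G r | A \ univ.image x = K} =
      (Fintype.card I - #K).choose (r - #K) := by
  rcases hcard.eq_or_lt with hr | hr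
  · rw [h.filter_sdiff_eq_singleton (fun i hi => h.x_notMem_traceGround i (hK hi)) hr,
      card_singleton, hr, Nat.sub_self, Nat.choose_zero_right]
  · rw [traceGround, if_neg hr.ne] at hK
    exact h.card_filter_sdiff_eq_choose_of_subset_image hK hcard

theorem card_level_le (h : IsClawLabelling G c x y) (hℱ : ℱ ⊆ indepSetsSize G r)
    (hoff : IntersectingOff (univ.image x) ℱ) (hk : k ≤ r) (hr : 2 * r ≤ Fintype.card I + 1) :
    #{A ∈ ℱ | #(A \ univ.image x) = k} ≤
      (Fintype.card I - k).choose (r - k) * (#(traceGround c y r k) - 1).choose (k - 1) := by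
  let traces := image (· \ univ.image x) {A ∈ ℱ | #(A \ univ.image x) = k}
  have htraces : traces ⊆ powersetCard k (traceGround c y r k) := by
    refine image_subset_iff.2 fun A hA => ?_
    obtain ⟨hAℱ, rfl⟩ := mem_filter.1 hA
    exact mem_powersetCard.2 ⟨h.sdiff_subset_traceGround (hℱ hAℱ), rfl⟩
  have hint : PairwiseIntersecting traces := by
    refine IntersectingOff.pairwiseIntersecting_image_sdiff fun A hA B hB => ?_
    exact hoff A (mem_filter.1 hA).1 B (mem_filter.1 hB).1
  refine (card_le_mul_card_image (f := (· \ univ.image x)) _ _ fun K hK => ?_).trans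
    (Nat.mul_le_mul_left _ (card_le_choose_of_pairwiseIntersecting htraces hint
      (h.two_mul_le_card_traceGround hk hr)))
  obtain ⟨hK, rfl⟩ := mem_powersetCard.1 (htraces hK)
  rw [← h.card_filter_sdiff_eq_choose hK hk]
  exact card_le_card (filter_subset_filter _ ((filter_subset _ _).trans hℱ))

theorem card_level_ekrStar (h : IsClawLabelling G c x y) (hk₁ : 1 ≤ k) (hk : k ≤ r)
    (j : I) :
    #{A ∈ ekrStar G r (y j) | #(A \ univ.image x) = k} =
      (Fintype.card I - k).choose (r - k) * (#(traceGround c y r k) - 1).choose (k - 1) := by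
  let traces := {K ∈ powersetCard k (traceGround c y r k) | {y j} ⊆ K}
  have htraces : #traces = (#(traceGround c y r k) - 1).choose (k - 1) := by
    rw [card_filter_powersetCard_subset _ _ _ (singleton_subset_iff.2 (y_mem_traceGround _ _ _ _ j))
      (by rwa [card_singleton]), card_singleton]
  have hmaps : ∀ A ∈ {A ∈ ekrStar G r (y j) | #(A \ univ.image x) = k},
      A \ univ.image x ∈ traces := by
    intro A hA
    obtain ⟨hstar, rfl⟩ := mem_filter.1 hA
    obtain ⟨hA, hj⟩ := mem_ekrStar.1 hstar
    exact mem_filter.2 ⟨mem_powersetCard.2 ⟨h.sdiff_subset_traceGround hA, rfl⟩,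
      singleton_subset_iff.2 (mem_sdiff.2 ⟨hj, h.y_notMem_image_x j⟩)⟩
  rw [card_eq_sum_card_fiberwise hmaps, ← htraces, mul_comm]
  refine sum_const_nat fun K hK => ?_
  obtain ⟨hK, hjK⟩ := mem_filter.1 hK
  obtain ⟨hK, rfl⟩ := mem_powersetCard.1 hK
  rw [← h.card_filter_sdiff_eq_choose hK hk, filter_filter, ekrStar, filter_filter]
  refine congrArg _ (filter_congr fun A _ => ⟨fun hA => hA.2.2, ?_⟩)
  rintro rfl
  exact ⟨(mem_sdiff.1 (singleton_subset_iff.1 hjK)).1, rfl, rfl⟩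

theorem card_level_le_card_level_ekrStar (h : IsClawLabelling G c x y)
    (hℱ : ℱ ⊆ indepSetsSize G r) (hoff : IntersectingOff (univ.image x) ℱ) (hk : k ∈ Icc 1 r)
    (hr : 2 * r ≤ Fintype.card I + 1) (j : I) :
    #{A ∈ ℱ | #(A \ univ.image x) = k} ≤
      #{A ∈ ekrStar G r (y j) | #(A \ univ.image x) = k} := by
  obtain ⟨hk₁, hk⟩ := mem_Icc.1 hk
  rw [h.card_level_ekrStar hk₁ hk j]
  exact h.card_level_le hℱ hoff hk hr

theorem card_eq_sum_card_levels {T : Finset V} (hℱ : ℱ ⊆ indepSetsSize G r)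
    (hoff : IntersectingOff T ℱ) : #ℱ = ∑ k ∈ Icc 1 r, #{A ∈ ℱ | #(A \ T) = k} :=
  card_eq_sum_card_fiberwise fun _ hA => mem_Icc.2 ⟨card_pos.2 (hoff.sdiff_nonempty hA),
    (card_le_card sdiff_subset).trans (mem_indepSetsSize.1 (hℱ hA)).2.le⟩

theorem card_le_card_ekrStar (h : IsClawLabelling G c x y) (hℱ : ℱ ⊆ indepSetsSize G r)
    (hoff : IntersectingOff (univ.image x) ℱ) (hr : 2 * r ≤ Fintype.card I + 1) (j : I) :
    #ℱ ≤ #(ekrStar G r (y j)) := by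
  rw [card_eq_sum_card_levels hℱ hoff, card_eq_sum_card_levels (ekrStar_subset _)
    (intersectingOff_ekrStar (h.y_notMem_image_x j))]
  exact sum_le_sum fun k hk => h.card_level_le_card_level_ekrStar hℱ hoff hk hr j

theorem exists_card_sdiff_eq_one (h : IsClawLabelling G c x y) (hℱ : ℱ ⊆ indepSetsSize G r)
    (hoff : IntersectingOff (univ.image x) ℱ) (hr₁ : 1 ≤ r) (hr : 2 * r ≤ Fintype.card I + 1)
    {j : I} (hle : #(ekrStar G r (y j)) ≤ #ℱ) : ∃ A ∈ ℱ, #(A \ univ.image x) = 1 := by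
  by_contra! hnone
  have hone : 1 ∈ Icc 1 r := mem_Icc.2 ⟨le_rfl, hr₁⟩
  have hempty : #{A ∈ ℱ | #(A \ univ.image x) = 1} = 0 :=
    card_eq_zero.2 (filter_eq_empty_iff.2 fun {A} hA => hnone A hA)
  refine hle.not_gt ?_
  rw [card_eq_sum_card_levels hℱ hoff, card_eq_sum_card_levels (ekrStar_subset _)
    (intersectingOff_ekrStar (h.y_notMem_image_x j))]
  refine sum_lt_sum (fun k hk => h.card_level_le_card_level_ekrStar hℱ hoff hk hr j) ⟨1, hone, ?_⟩
  rw [hempty, h.card_level_ekrStar le_rfl hr₁ j, Nat.sub_self, Nat.choose_zero_right, mul_one]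
  exact Nat.choose_pos (by omega)

theorem exists_eq_ekrStar_of_card_le (h : IsClawLabelling G c x y) (hℱ : ℱ ⊆ indepSetsSize G r)
    (hoff : IntersectingOff (univ.image x) ℱ) (hr₂ : 2 ≤ r) (hr : 2 * r ≤ Fintype.card I + 1)
    {j : I} (hle : #(ekrStar G r (y j)) ≤ #ℱ) : ∃ i, ℱ = ekrStar G r (y i) := by
  obtain ⟨A, hA, hcard⟩ := h.exists_card_sdiff_eq_one hℱ hoff (by omega) hr hle
  obtain ⟨v, hv⟩ := card_eq_one.1 hcard
  have hvy : v ∈ univ.image y := by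
    have hground := h.sdiff_subset_traceGround (hℱ hA)
    rw [hcard, traceGround, if_neg (by omega), hv] at hground
    exact singleton_subset_iff.1 hground
  obtain ⟨i, -, rfl⟩ := mem_image.1 hvy
  refine ⟨i, eq_of_subset_of_card_le (fun B hB => mem_ekrStar.2 ⟨hℱ hB, ?_⟩) ?_⟩
  · obtain ⟨z, hz⟩ := hoff A hA B hB
    rw [← sdiff_inter_right_comm, hv, mem_inter, mem_singleton] at hz
    exact hz.1 ▸ hz.2
  · exact (h.card_le_card_ekrStar (ekrStar_subset _)
      (intersectingOff_ekrStar (h.y_notMem_image_x i)) hr j).trans hle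

theorem exists_mem_ekrStar_disjoint (h : IsClawLabelling G c x y) (hr₂ : 2 ≤ r)
    (hr : 2 * r ≤ Fintype.card I + 1) (hA : #A ≤ r) (hcA : c ∉ A) {j : I} (hjA : y j ∉ A) :
    ∃ D ∈ ekrStar G r (y j), c ∈ D ∧ Disjoint D A := by
  have hcard : r - 2 ≤ #((univ.image y).erase (y j) \ A) := by
    have hleaves : #(univ.image y) = Fintype.card I := card_image_of_injective _ h.y_injective
    have := le_card_sdiff A ((univ.image y).erase (y j))
    rw [card_erase_of_mem (mem_image_of_mem y (mem_univ j))] at this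
    omega
  obtain ⟨S, hS, hScard⟩ := exists_subset_card_eq hcard
  have hjS : y j ∉ S := fun hj => by grind
  have hcS : c ∉ insert (y j) S := fun hc => by
    have := h.y_ne_root
    grind
  refine ⟨insert c (insert (y j) S), mem_ekrStar.2 ⟨mem_indepSetsSize.2
    ⟨h.mem_indepSets_of_forall_x_notMem fun i hi => ?_, ?_⟩, by simp⟩, by simp, ?_⟩
  · have hroot := (h.root_adj i).ne'
    have hleaf := h.x_ne_y i
    grind
  · rw [card_insert_of_notMem hcS, card_insert_of_notMem hjS]
    omega
  · simp only [disjoint_insert_left]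
    exact ⟨hcA, hjA, disjoint_of_subset_left hS sdiff_disjoint⟩

theorem eq_ekrStar_of_forall_root_mem_iff {𝒜 : Finset (Finset V)} (h : IsClawLabelling G c x y)
    (h𝒜 : 𝒜 ⊆ indepSetsSize G r) (hint : PairwiseIntersecting 𝒜) (hr₂ : 2 ≤ r)
    (hr : 2 * r ≤ Fintype.card I + 1) {j : I} (hle : #(ekrStar G r (y j)) ≤ #𝒜)
    (hroot : ∀ A, c ∈ A → (A ∈ ekrStar G r (y j) ↔ A ∈ 𝒜)) : 𝒜 = ekrStar G r (y j) := by
  refine eq_of_subset_of_card_le (fun A hA => mem_ekrStar.2 ⟨h𝒜 hA, ?_⟩) hle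
  by_contra hjA
  have hcA : c ∉ A := fun hcA => hjA (mem_ekrStar.1 ((hroot A hcA).2 hA)).2
  obtain ⟨D, hD, hcD, hdisj⟩ :=
    h.exists_mem_ekrStar_disjoint hr₂ hr (mem_indepSetsSize.1 (h𝒜 hA)).2.le hcA hjA
  exact not_disjoint_iff_nonempty_inter.2 (hint D ((hroot D hcD).1 hD) A hA) hdisj

theorem isStrictEKR (h : IsClawLabelling G c x y) (hr₂ : 2 ≤ r)
    (hr : 2 * r ≤ Fintype.card I + 1) : IsStrictEKR G r := by
  have : Nonempty I := Fintype.card_pos_iff.1 (by omega)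
  inhabit I
  refine isStrictEKR_of_le_card_ekrStar (y default) (fun 𝒜 h𝒜 hint => ?_)
    fun 𝒜 h𝒜 hint hle => ?_ <;>
    obtain ⟨ℱ, hℱ, hoff, hcard, hroot⟩ := h.exists_intersectingOff_image h𝒜 hint univ
  · exact hcard ▸ h.card_le_card_ekrStar hℱ hoff hr default
  · obtain ⟨j, rfl⟩ := h.exists_eq_ekrStar_of_card_le hℱ hoff hr₂ hr (hcard ▸ hle)
    exact ⟨y j, h.eq_ekrStar_of_forall_root_mem_iff h𝒜 hint hr₂ hr hcard.le hroot⟩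

end Traces

end IsClawLabelling

/-- If `G` is a depth-two claw with `μ(G) ≥ 2r − 1`, then `G` is
strictly `r`-EKR. -/
theorem depthTwoClaw_strictEKR {V : Type*} [Fintype V] (r : ℕ) (hr : 0 < r)
    (G : SimpleGraph V) (root : V) (hG : IsDepthTwoClaw G root)
    (hmu : 2 * r - 1 ≤ graphMu G) :
    IsStrictEKR G r := by
  obtain rfl | hr₂ : r = 1 ∨ 2 ≤ r := by omega
  · have : Nonempty V := ⟨root⟩
    exact isStrictEKR_one G
  obtain ⟨y, h⟩ := hG.exists_isClawLabelling
  refine h.isStrictEKR hr₂ ?_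
  rcases isEmpty_or_nonempty {v // G.Adj root v} with hI | hI
  · have := h.graphMu_le_one_of_isEmpty
    omega
  · have := h.graphMu_le_card
    omega
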